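/- Let d, k be positive integers, Q ∈ ℝ^{d×d}, S : ℝ^d → ℝ^{d×d} Lipschitz continuous with constant L_S, h > 0, C > 0, and q ≥ 1 a real number. Let y, y^{(0)}, y^{(1)}, …, y^{(k)} : [0, h] → ℝ^d be continuous with y(t) = y(0) + ∫₀ᵗ S(y(r)) Q y(r) dr, y^{(j)}(0) = y(0), and y^{(j)}(t) = y(0) + ∫₀ᵗ S(y^{(j-1)}(r)) Q y^{(j-1)}(r) dr for each j ∈ {1,…,k} and all t ∈ [0, h]. Set C_y = sup_{t∈[0,h]} ‖y(t)‖ and M^{(j-1)} = sup_{t∈[0,h]} ‖S(y^{(j-1)}(t))‖₂, and suppose sup_{t∈[0,h]} ‖y^{(0)}(t) − y(t)‖ ≤ C h^q. Define D₀ = C and D_j = ‖Q‖₂ (L_S C_y + M^{(j-1)}) D_{j-1} for j ≥ 1. Then for each j ∈ {1,…,k}, sup_{t∈[0,h]} ‖y^{(j)}(t) − y(t)‖ ≤ D_j h^{q+j}. -/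

import Mathlib

/-!
The integrands of the two equations differ by
`S(Y) Q Y - S(y) Q y = S(Y) Q (Y - y) + (S(Y) - S(y)) Q y`,
whose norm is at most `‖Q‖₂ (L_S C_y + M) ‖Y - y‖` (`norm_field_sub_le`). Since both trajectories
start at the same point, integrating over `[0, t] ⊆ [0, h]` turns a uniform bound on the error of
`Y (j - 1)` into one for `Y j` with one more factor `h`, and induction on `j` concludes.
The suprema `C_y` and `M` are genuine upper bounds because the functions involved are continuous
on the compact interval `[0, h]`; continuity of `S` comes from its Lipschitz bound.
-/

open scoped RealInnerProductSpace
open Set MeasureTheory intervalIntegral Filter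

/-- Action of a matrix on a vector of the Euclidean space `ℝ^d`. -/
noncomputable def matVec {d : ℕ} (M : Matrix (Fin d) (Fin d) ℝ)
    (x : EuclideanSpace ℝ (Fin d)) : EuclideanSpace ℝ (Fin d) :=
  Matrix.toEuclideanLin M x

/-- The spectral norm `‖M‖₂` of a matrix: the operator norm induced by the Euclidean norm. -/
noncomputable def matNorm2 {d : ℕ} (M : Matrix (Fin d) (Fin d) ℝ) : ℝ :=
  ‖LinearMap.toContinuousLinearMap (Matrix.toEuclideanLin M)‖

/-- The maximum absolute row-sum norm `‖A‖_∞` of a matrix. -/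
noncomputable def rowSumNorm {s : ℕ} (A : Matrix (Fin s) (Fin s) ℝ) : ℝ :=
  ⨆ i, ∑ j, abs (A i j)


/-- A matrix as a continuous linear operator on Euclidean space, so that `matNorm2 M = ‖matCLM M‖`
and `matVec M x = matCLM M x` hold definitionally. -/
noncomputable def matCLM {d : ℕ} (M : Matrix (Fin d) (Fin d) ℝ) :
    EuclideanSpace ℝ (Fin d) →L[ℝ] EuclideanSpace ℝ (Fin d) :=
  LinearMap.toContinuousLinearMap (Matrix.toEuclideanLin M)

lemma matCLM_sub {d : ℕ} (A B : Matrix (Fin d) (Fin d) ℝ) :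
    matCLM (A - B) = matCLM A - matCLM B := by
  simp [matCLM]

lemma matNorm2_nonneg {d : ℕ} (M : Matrix (Fin d) (Fin d) ℝ) : 0 ≤ matNorm2 M :=
  norm_nonneg _

lemma norm_matVec_le {d : ℕ} (M : Matrix (Fin d) (Fin d) ℝ) (x : EuclideanSpace ℝ (Fin d)) :
    ‖matVec M x‖ ≤ matNorm2 M * ‖x‖ :=
  (matCLM M).le_opNorm x

lemma continuous_matCLM_comp {d : ℕ} {S : EuclideanSpace ℝ (Fin d) → Matrix (Fin d) (Fin d) ℝ}
    {LS : ℝ} (hLip : ∀ x y, matNorm2 (S x - S y) ≤ LS * ‖x - y‖) :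
    Continuous fun x => matCLM (S x) := by
  refine (LipschitzWith.of_dist_le_mul (K := LS.toNNReal) fun x y => ?_).continuous
  rw [dist_eq_norm, dist_eq_norm, ← matCLM_sub]
  exact (hLip x y).trans (mul_le_mul_of_nonneg_right (Real.le_coe_toNNReal LS) (norm_nonneg _))

lemma norm_field_sub_le {d : ℕ} {S : EuclideanSpace ℝ (Fin d) → Matrix (Fin d) (Fin d) ℝ}
    {LS : ℝ} (hLip : ∀ x y, matNorm2 (S x - S y) ≤ LS * ‖x - y‖) (hLS : 0 ≤ LS)
    (Q : Matrix (Fin d) (Fin d) ℝ) {u v : EuclideanSpace ℝ (Fin d)} {Cy M : ℝ}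
    (hv : ‖v‖ ≤ Cy) (hM : matNorm2 (S u) ≤ M) :
    ‖matVec (S u) (matVec Q u) - matVec (S v) (matVec Q v)‖
      ≤ matNorm2 Q * (LS * Cy + M) * ‖u - v‖ := by
  have hsplit : matVec (S u) (matVec Q u) - matVec (S v) (matVec Q v)
      = matVec (S u) (matVec Q (u - v)) + matVec (S u - S v) (matVec Q v) := by
    simp [matVec]
  have hQ := matNorm2_nonneg Q
  have hM0 : 0 ≤ M := (matNorm2_nonneg _).trans hM
  rw [hsplit]
  calc _ ≤ ‖matVec (S u) (matVec Q (u - v))‖ + ‖matVec (S u - S v) (matVec Q v)‖ :=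
        norm_add_le _ _
    _ ≤ M * (matNorm2 Q * ‖u - v‖) + (LS * ‖u - v‖) * (matNorm2 Q * Cy) := by
        refine add_le_add ((norm_matVec_le _ _).trans ?_) ((norm_matVec_le _ _).trans ?_)
        · exact mul_le_mul hM (norm_matVec_le _ _) (norm_nonneg _) hM0
        · exact mul_le_mul (hLip u v)
            ((norm_matVec_le _ _).trans (mul_le_mul_of_nonneg_left hv hQ))
            (norm_nonneg _) (by positivity)
    _ = _ := by ring

lemma le_iSup_Icc_of_continuousOn {h : ℝ} {f : ℝ → ℝ} (hf : ContinuousOn f (Set.Icc 0 h))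
    {t : ℝ} (ht : t ∈ Set.Icc 0 h) : f t ≤ ⨆ t : Set.Icc (0:ℝ) h, f t := by
  have hb : BddAbove (Set.range fun t : Set.Icc (0:ℝ) h => f t) := by
    rw [← Set.image_eq_range]
    exact isCompact_Icc.bddAbove_image hf
  exact le_ciSup hb ⟨t, ht⟩

/-- Error estimate for the chained explicit system
`ẏ^{(j)} = S(y^{(j-1)}) Q y^{(j-1)}` (`j = 1, …, k`) with common initial value: with
`D₀ = C` and `D_j = ‖Q‖₂ (L_S C_y + M^{(j-1)}) D_{j-1}`, if `‖y^{(0)} − y‖ ≤ C h^q` then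
`‖y^{(j)} − y‖ ≤ D_j h^{q+j}` on `[0, h]` for each `j ∈ {1,…,k}`. -/
theorem explicit_chained_error_estimate
    (d k : ℕ) (hd : 0 < d) (hk : 0 < k)
    (Q : Matrix (Fin d) (Fin d) ℝ)
    (S : EuclideanSpace ℝ (Fin d) → Matrix (Fin d) (Fin d) ℝ)
    (LS : ℝ) (hLip : ∀ x y : EuclideanSpace ℝ (Fin d), matNorm2 (S x - S y) ≤ LS * ‖x - y‖)
    (h : ℝ) (hh : 0 < h) (C : ℝ) (hC : 0 < C) (q : ℝ) (hq : 1 ≤ q)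
    (y : ℝ → EuclideanSpace ℝ (Fin d)) (Y : ℕ → ℝ → EuclideanSpace ℝ (Fin d))
    (hyc : ContinuousOn y (Set.Icc 0 h))
    (hYc : ∀ j ≤ k, ContinuousOn (Y j) (Set.Icc 0 h))
    (hy : ∀ t ∈ Set.Icc (0:ℝ) h,
      y t = y 0 + ∫ r in (0:ℝ)..t, matVec (S (y r)) (matVec Q (y r)))
    (hY0 : ∀ j ≤ k, Y j 0 = y 0)
    (hYrec : ∀ j, 1 ≤ j → j ≤ k → ∀ t ∈ Set.Icc (0:ℝ) h,
      Y j t = y 0 + ∫ r in (0:ℝ)..t, matVec (S (Y (j - 1) r)) (matVec Q (Y (j - 1) r)))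
    (hinit : ∀ t ∈ Set.Icc (0:ℝ) h, ‖Y 0 t - y t‖ ≤ C * h ^ q)
    (D : ℕ → ℝ) (hD0 : D 0 = C)
    (hDrec : ∀ j, 1 ≤ j →
      D j = matNorm2 Q *
        (LS * (⨆ t : Set.Icc (0:ℝ) h, ‖y ↑t‖) +
          (⨆ t : Set.Icc (0:ℝ) h, matNorm2 (S (Y (j - 1) ↑t)))) * D (j - 1)) :
    ∀ j, 1 ≤ j → j ≤ k → ∀ t ∈ Set.Icc (0:ℝ) h,
      ‖Y j t - y t‖ ≤ D j * h ^ (q + (j : ℝ)) := by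
  -- `d > 0` provides a pair of distinct points, which forces the Lipschitz constant to be `≥ 0`.
  have hLS : 0 ≤ LS := by
    have := (matNorm2_nonneg _).trans (hLip (EuclideanSpace.single ⟨0, hd⟩ 1) 0)
    simpa using this
  have hSc := continuous_matCLM_comp hLip
  have hfield : ∀ z : ℝ → EuclideanSpace ℝ (Fin d), ContinuousOn z (Set.Icc 0 h) →
      ContinuousOn (fun r => matVec (S (z r)) (matVec Q (z r))) (Set.Icc 0 h) := fun z hz =>
    (hSc.comp_continuousOn hz).clm_apply ((matCLM Q).continuous.comp_continuousOn hz)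
  have key : ∀ j, j ≤ k → ∀ t ∈ Set.Icc (0:ℝ) h,
      ‖Y j t - y t‖ ≤ D j * h ^ (q + (j : ℝ)) := by
    intro j
    induction j with
    | zero => intro _ t ht; simpa [hD0] using hinit t ht
    | succ j ih =>
      intro hjk t ht
      have hYj := hYc j (by omega)
      have hrec := hYrec (j + 1) (by omega) hjk t ht
      have hD := hDrec (j + 1) (by omega)
      simp only [Nat.add_sub_cancel] at hrec hD
      set Cy := ⨆ t : Set.Icc (0:ℝ) h, ‖y ↑t‖
      set M := ⨆ t : Set.Icc (0:ℝ) h, matNorm2 (S (Y j ↑t))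
      have hCy : ∀ r ∈ Set.Icc (0:ℝ) h, ‖y r‖ ≤ Cy := fun r hr =>
        le_iSup_Icc_of_continuousOn hyc.norm hr
      have hM : ∀ r ∈ Set.Icc (0:ℝ) h, matNorm2 (S (Y j r)) ≤ M := fun r hr =>
        le_iSup_Icc_of_continuousOn (f := fun r => matNorm2 (S (Y j r)))
          (hSc.comp_continuousOn hYj).norm hr
      have hK : 0 ≤ matNorm2 Q * (LS * Cy + M) := by
        have h1 := (norm_nonneg _).trans (hCy t ht)
        have h2 := (matNorm2_nonneg _).trans (hM t ht)
        have h3 := matNorm2_nonneg Q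
        positivity
      have hbound : ∀ r ∈ Set.Icc (0:ℝ) h,
          ‖matVec (S (Y j r)) (matVec Q (Y j r)) - matVec (S (y r)) (matVec Q (y r))‖
            ≤ D (j + 1) * h ^ (q + (j : ℝ)) := fun r hr => by
        refine (norm_field_sub_le hLip hLS Q (hCy r hr) (hM r hr)).trans ?_
        rw [hD, mul_assoc _ (D j)]
        exact mul_le_mul_of_nonneg_left (ih (by omega) r hr) hK
      have hsub : Set.uIcc 0 t ⊆ Set.Icc 0 h := by
        rw [Set.uIcc_of_le ht.1]
        exact Set.Icc_subset_Icc_right ht.2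
      rw [hrec, hy t ht, add_sub_add_left_eq_sub, ← intervalIntegral.integral_sub
        ((hfield _ hYj).mono hsub).intervalIntegrable ((hfield _ hyc).mono hsub).intervalIntegrable]
      refine (intervalIntegral.norm_integral_le_of_norm_le_const fun r hr =>
        hbound r (hsub (Set.uIoc_subset_uIcc hr))).trans ?_
      rw [sub_zero, abs_of_nonneg ht.1]
      have hpow : h ^ (q + ((j + 1 : ℕ) : ℝ)) = h ^ (q + (j : ℝ)) * h := by
        rw [Nat.cast_succ, ← add_assoc, Real.rpow_add_one hh.ne']
      rw [hpow, ← mul_assoc]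
      exact mul_le_mul_of_nonneg_left ht.2 ((norm_nonneg _).trans (hbound t ht))
  exact fun j _ => key j
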